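/- The function μ ↦ λ₁(μ) is upper semi-continuous on (𝒫^1_log(SL_d(𝕂)), W^1_log), and hence upper semi-continuous in all the finer Wasserstein-type topologies. -/

import Mathlib

/-!
Upper semi-continuity holds because `λ₁` is an infimum of upper semi-continuous functions of the
law, namely the normalised expectations of `log ‖A_n‖` at each fixed time `n`.

Replace the sup norm of matrices by `opn M = d ‖M‖`, which is submultiplicative and, by the Leibniz
formula for the determinant, at least `1` on `SL_d(𝕂)`. Then `elog ν n = E[log (d ‖A_n‖)]` is a
nonnegative subadditive sequence, so that `λ₁(ν) = inf_n (elog ν n) / n` by Fekete's lemma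
(`lyap1_eq_lim`, `lyap1_le_elog_div`). It therefore suffices to bound, for each fixed `n`, the
upper limit of `elog (μseq k) n` by `elog μ n` (`eventually_elog_le`).

For this, take couplings `η` of `μseq k` and `μ` whose cost tends to `0`, and draw `n` independent
pairs `(A_i, B_i)` with law `η`. With `β = ∏ d ‖B_i‖` and `x = ∏ (1 + d ‖A_i - B_i‖)`, a telescoping
argument bounds the norm of the difference of the two products by `β (x - 1)`
(`opn_prodTM_sub_le`). As the product of the `B_i` has norm at least `1`, the difference of the
logarithms is at most `log (1 + β (x - 1))`, which for every natural number `R` is at most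
`(R + 1) log x`, plus `log β` on the event `β > R` (`log_one_add_mul_le`). The expectation of
the second term depends only on `μ` and tends to `0` as `R → ∞` by dominated convergence
(`tendsto_tailInt`); once `R` is fixed, the expectation of the first is at most a constant times
the cost of the coupling, since `log (1 + d t) ≤ C log^{1⋆} t` (`exists_cost_bound`).
-/

open MeasureTheory Filter Topology Matrix
open scoped ENNReal

noncomputable section

namespace RMP

/-- The function `log^{p⋆}`: `(p/e)^p · t` for `t < e^p` and `(log t)^p` for `t ≥ e^p`. -/
def logpStar (p t : ℝ) : ℝ :=
  if t < Real.exp p then (p / Real.exp 1) ^ p * t else Real.log t ^ p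

/-- A valid choice of semi-logarithm function `slog^δ`: concave and increasing on `[0,∞)`,
vanishing at `0`, and agreeing with `t ↦ exp((log t)^δ)` for all large `t`. -/
structure IsSlog (δ : ℝ) (s : ℝ → ℝ) : Prop where
  concave : ConcaveOn ℝ (Set.Ici 0) s
  mono : MonotoneOn s (Set.Ici 0)
  zero : s 0 = 0
  eventually_eq : ∃ T : ℝ, ∀ t ≥ T, s t = Real.exp (Real.log t ^ δ)

/-- The infimum of the cost of transporting `μ` to `ν` over all couplings. -/
def transportCost {G : Type*} [MeasurableSpace G] (c : G → G → ℝ)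
    (μ ν : Measure G) : ℝ≥0∞ :=
  ⨅ (η : Measure (G × G)) (_ : η.map Prod.fst = μ ∧ η.map Prod.snd = ν),
    ∫⁻ q, ENNReal.ofReal (c q.1 q.2) ∂η

/-- Sequential compactness of a family of measures with respect to a Wasserstein-type
distance functional `W`; for metric topologies this is equivalent to compactness. -/
def SeqCompactIn {G : Type*} [MeasurableSpace G]
    (W : Measure G → Measure G → ℝ≥0∞) (K : Set (Measure G)) : Prop :=
  ∀ u : ℕ → Measure G, (∀ n, u n ∈ K) →
    ∃ μ ∈ K, ∃ φ : ℕ → ℕ, StrictMono φ ∧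
      Tendsto (fun k => W (u (φ k)) μ) atTop (nhds 0)

variable {𝕂 : Type*} [NontriviallyNormedField 𝕂] {d : ℕ}

attribute [local instance] Matrix.normedAddCommGroup

local instance slTop : TopologicalSpace (SpecialLinearGroup (Fin d) 𝕂) :=
  inferInstanceAs (TopologicalSpace {A : Matrix (Fin d) (Fin d) 𝕂 // A.det = 1})

local instance matMS {ι : Type*} [Fintype ι] : MeasurableSpace (Matrix ι ι 𝕂) := borel _
local instance slMS : MeasurableSpace (SpecialLinearGroup (Fin d) 𝕂) := borel _

/-- The (topological) support of a measure. -/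
def msupport {G : Type*} [TopologicalSpace G] [MeasurableSpace G] (μ : Measure G) : Set G :=
  {g | ∀ U : Set G, IsOpen U → g ∈ U → μ U ≠ 0}

/-- `μ` is strongly irreducible: no finite union of nontrivial proper subspaces of `𝕂^d`
is invariant under every element of the group generated by the support of `μ`. -/
def StronglyIrreducible (μ : Measure (SpecialLinearGroup (Fin d) 𝕂)) : Prop :=
  ¬ ∃ S : Finset (Submodule 𝕂 (Fin d → 𝕂)), S.Nonempty ∧
      (∀ V ∈ S, V ≠ ⊥ ∧ V ≠ ⊤) ∧
      ∀ g ∈ Subgroup.closure (msupport μ),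
        ∀ v ∈ ⋃ V ∈ S, (V : Set (Fin d → 𝕂)),
          (g : Matrix (Fin d) (Fin d) 𝕂).mulVec v ∈ ⋃ V ∈ S, (V : Set (Fin d → 𝕂))

/-- `μ` is contracting: the group generated by its support contains a sequence which,
after normalization by scalars, converges to a rank one matrix. -/
def Contracting (μ : Measure (SpecialLinearGroup (Fin d) 𝕂)) : Prop :=
  ∃ g : ℕ → SpecialLinearGroup (Fin d) 𝕂,
    (∀ n, g n ∈ Subgroup.closure (msupport μ)) ∧
    ∃ (c : ℕ → 𝕂) (L : Matrix (Fin d) (Fin d) 𝕂), L.rank = 1 ∧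
      Tendsto (fun n => ‖c n • ((g n : Matrix (Fin d) (Fin d) 𝕂)) - L‖) atTop (nhds 0)

/-- The product `M_n ⋯ M_1` of the random matrices, as a function of `(M_1, …, M_n)`. -/
def prodTM {n : ℕ} (ω : Fin n → SpecialLinearGroup (Fin d) 𝕂) :
    SpecialLinearGroup (Fin d) 𝕂 :=
  (List.ofFn ω).reverse.prod

/-- The top Lyapunov exponent `λ₁(μ) = lim (1/n) E[log ‖A_n^μ‖]`. -/
def lyap1 (μ : Measure (SpecialLinearGroup (Fin d) 𝕂)) : ℝ :=
  limsup (fun n : ℕ =>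
    (n : ℝ)⁻¹ * ∫ ω, Real.log ‖((prodTM ω : SpecialLinearGroup (Fin d) 𝕂) :
        Matrix (Fin d) (Fin d) 𝕂)‖ ∂(Measure.pi fun _ : Fin n => μ)) atTop

/-- The index type of size `d(d-1)/2` for the second exterior power. -/
abbrev PairIdx (d : ℕ) := {q : Fin d × Fin d // q.1 < q.2}

/-- The second exterior power (second compound matrix) of a matrix, as a matrix indexed by
the `d(d-1)/2` increasing pairs; its entries are the `2 × 2` minors. -/
def wedge2 (M : Matrix (Fin d) (Fin d) 𝕂) : Matrix (PairIdx d) (PairIdx d) 𝕂 :=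
  fun p q => M p.1.1 q.1.1 * M p.1.2 q.1.2 - M p.1.1 q.1.2 * M p.1.2 q.1.1

/-- The sum of the two top Lyapunov exponents,
`λ₁(μ) + λ₂(μ) = lim (1/n) E[log ‖∧² A_n^μ‖]`. -/
def lyap12 (μ : Measure (SpecialLinearGroup (Fin d) 𝕂)) : ℝ :=
  limsup (fun n : ℕ =>
    (n : ℝ)⁻¹ * ∫ ω, Real.log ‖wedge2 (((prodTM ω : SpecialLinearGroup (Fin d) 𝕂) :
        Matrix (Fin d) (Fin d) 𝕂))‖ ∂(Measure.pi fun _ : Fin n => μ)) atTop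

/-- The second Lyapunov exponent. -/
def lyap2 (μ : Measure (SpecialLinearGroup (Fin d) 𝕂)) : ℝ := lyap12 μ - lyap1 μ

/-- Membership in `𝒫^p_log(SL_d(𝕂))`. -/
def MemPlog (p : ℝ) (μ : Measure (SpecialLinearGroup (Fin d) 𝕂)) : Prop :=
  IsProbabilityMeasure μ ∧
    ∫⁻ M, ENNReal.ofReal (logpStar p ‖(M : Matrix (Fin d) (Fin d) 𝕂)‖) ∂μ < ⊤

/-- The logarithmic Wasserstein distance `W^p_log`. -/
def Wlog (p : ℝ) (μ ν : Measure (SpecialLinearGroup (Fin d) 𝕂)) : ℝ≥0∞ :=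
  transportCost (fun A B : SpecialLinearGroup (Fin d) 𝕂 =>
    logpStar p ‖((A : Matrix (Fin d) (Fin d) 𝕂)) - (B : Matrix (Fin d) (Fin d) 𝕂)‖) μ ν

/-- Membership in `𝒫^δ_slog(SL_d(𝕂))`, for a given semi-logarithm function `s = slog^δ`. -/
def MemPslog (s : ℝ → ℝ) (μ : Measure (SpecialLinearGroup (Fin d) 𝕂)) : Prop :=
  IsProbabilityMeasure μ ∧
    ∫⁻ M, ENNReal.ofReal (s ‖(M : Matrix (Fin d) (Fin d) 𝕂)‖) ∂μ < ⊤

/-- The semi-logarithmic Wasserstein distance `W^δ_slog` associated to `s = slog^δ`. -/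
def Wslog (s : ℝ → ℝ) (μ ν : Measure (SpecialLinearGroup (Fin d) 𝕂)) : ℝ≥0∞ :=
  transportCost (fun A B : SpecialLinearGroup (Fin d) 𝕂 =>
    s ‖((A : Matrix (Fin d) (Fin d) 𝕂)) - (B : Matrix (Fin d) (Fin d) 𝕂)‖) μ ν

/-- Membership in `𝒫^α(SL_d(𝕂))`: a finite moment of order `α`. -/
def MemPalpha (α : ℝ) (μ : Measure (SpecialLinearGroup (Fin d) 𝕂)) : Prop :=
  IsProbabilityMeasure μ ∧
    ∫⁻ M, ENNReal.ofReal (‖(M : Matrix (Fin d) (Fin d) 𝕂)‖ ^ α) ∂μ < ⊤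

/-- The Wasserstein-type distance `W^α` (for `α ≥ 1` one takes the `1/α`-th power of the
infimal cost). -/
def Walpha (α : ℝ) (μ ν : Measure (SpecialLinearGroup (Fin d) 𝕂)) : ℝ≥0∞ :=
  (transportCost (fun A B : SpecialLinearGroup (Fin d) 𝕂 =>
    ‖((A : Matrix (Fin d) (Fin d) 𝕂)) - (B : Matrix (Fin d) (Fin d) 𝕂)‖ ^ α) μ ν) ^
      (1 / max α 1)

/-- Membership in `𝒫^p_log` for measures on a matrix space. -/
def MemPlogMat {ι : Type*} [Fintype ι] (p : ℝ) (μ : Measure (Matrix ι ι 𝕂)) : Prop :=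
  IsProbabilityMeasure μ ∧ ∫⁻ M, ENNReal.ofReal (logpStar p ‖M‖) ∂μ < ⊤

/-- The logarithmic Wasserstein distance `W^p_log` on measures on a matrix space. -/
def WlogMat {ι : Type*} [Fintype ι] (p : ℝ) (μ ν : Measure (Matrix ι ι 𝕂)) : ℝ≥0∞ :=
  transportCost (fun A B => logpStar p ‖A - B‖) μ ν

/-- The pushforward of a measure on `SL_d(𝕂)` under the second exterior power. -/
def wedgePush (μ : Measure (SpecialLinearGroup (Fin d) 𝕂)) :
    Measure (Matrix (PairIdx d) (PairIdx d) 𝕂) :=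
  μ.map fun g : SpecialLinearGroup (Fin d) 𝕂 => wedge2 ((g : SpecialLinearGroup (Fin d) 𝕂) : Matrix (Fin d) (Fin d) 𝕂)

/-- `σ ≥ 0` is the standard deviation in the Benoist–Quint central limit theorem for `μ`:
`(log‖A_n^μ‖ - n λ₁(μ))/√n` converges in distribution to `N(0, σ²)`. -/
def IsCLTStdDev (μ : Measure (SpecialLinearGroup (Fin d) 𝕂)) (σ : ℝ) : Prop :=
  0 ≤ σ ∧ ∀ f : ℝ → ℝ, Continuous f → (∃ M, ∀ x, |f x| ≤ M) →
    Tendsto (fun n : ℕ =>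
        ∫ ω, f ((Real.log ‖((prodTM ω : SpecialLinearGroup (Fin d) 𝕂) :
            Matrix (Fin d) (Fin d) 𝕂)‖ - (n : ℝ) * lyap1 μ) / Real.sqrt n)
          ∂(Measure.pi fun _ : Fin n => μ)) atTop
      (nhds (∫ x, f x ∂(ProbabilityTheory.gaussianReal 0 (Real.toNNReal (σ ^ 2)))))


/-! ### A submultiplicative norm -/

/-- The entrywise sup norm multiplied by the dimension: a submultiplicative norm on
`d × d` matrices, and one which is at least `1` on matrices of determinant one. -/
def opn (M : Matrix (Fin d) (Fin d) 𝕂) : ℝ := d * ‖M‖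

/-- The matrix underlying an element of `SL_d(𝕂)`. -/
def mat (A : SpecialLinearGroup (Fin d) 𝕂) : Matrix (Fin d) (Fin d) 𝕂 := A

theorem mat_mul (A B : SpecialLinearGroup (Fin d) 𝕂) : mat (A * B) = mat A * mat B :=
  Matrix.SpecialLinearGroup.coe_mul A B

theorem det_mat (A : SpecialLinearGroup (Fin d) 𝕂) : (mat A).det = 1 := A.det_coe

theorem opn_nonneg (M : Matrix (Fin d) (Fin d) 𝕂) : 0 ≤ opn M := by
  unfold opn; positivity

theorem opn_add_le (A B : Matrix (Fin d) (Fin d) 𝕂) : opn (A + B) ≤ opn A + opn B := by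
  unfold opn
  rw [← mul_add]
  gcongr
  exact norm_add_le A B

theorem opn_mul_le (A B : Matrix (Fin d) (Fin d) 𝕂) : opn (A * B) ≤ opn A * opn B := by
  have h : ‖A * B‖ ≤ d * ‖A‖ * ‖B‖ := by
    rw [Matrix.norm_le_iff (by positivity)]
    intro i j
    rw [Matrix.mul_apply]
    calc ‖∑ k, A i k * B k j‖ ≤ ∑ k : Fin d, ‖A‖ * ‖B‖ := by
          refine norm_sum_le_of_le _ fun k _ => ?_
          rw [norm_mul]
          exact mul_le_mul (Matrix.norm_entry_le_entrywise_sup_norm A)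
            (Matrix.norm_entry_le_entrywise_sup_norm B) (norm_nonneg _) (norm_nonneg _)
      _ = d * ‖A‖ * ‖B‖ := by simp [mul_assoc]
  unfold opn
  calc (d : ℝ) * ‖A * B‖ ≤ d * (d * ‖A‖ * ‖B‖) := by gcongr
    _ = d * ‖A‖ * (d * ‖B‖) := by ring

/-- The Leibniz formula gives `1 = |det A| ≤ d! ‖A‖ ^ d ≤ (d ‖A‖) ^ d`. -/
theorem one_le_opn (hd : 2 ≤ d) (A : SpecialLinearGroup (Fin d) 𝕂) :
    1 ≤ opn (mat A) := by
  have h := Matrix.det_le (A := (mat A))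
    (abv := NormedField.toAbsoluteValue 𝕂) (x := ‖(mat A)‖)
    (fun i j => Matrix.norm_entry_le_entrywise_sup_norm (mat A))
  rw [det_mat, map_one, Fintype.card_fin, nsmul_eq_mul] at h
  by_contra hlt
  have h2 : (opn (mat A)) ^ d < 1 :=
    pow_lt_one₀ (opn_nonneg _) (not_le.1 hlt) (by omega)
  have h3 : ((d.factorial : ℕ) : ℝ) ≤ (d : ℝ) ^ d := by exact_mod_cast d.factorial_le_pow
  unfold opn at h2
  rw [mul_pow] at h2
  nlinarith [mul_le_mul_of_nonneg_right h3
    (pow_nonneg (norm_nonneg (mat A)) d)]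

/-! ### Products of matrices -/

theorem prodTM_succ {n : ℕ} (ω : Fin (n + 1) → SpecialLinearGroup (Fin d) 𝕂) :
    prodTM ω = prodTM (fun i => ω i.succ) * ω 0 := by
  simp [prodTM, List.ofFn_succ]

theorem prodTM_add {m n : ℕ} (ω : Fin (m + n) → SpecialLinearGroup (Fin d) 𝕂) :
    prodTM ω = prodTM (fun i => ω (i.natAdd m)) * prodTM (fun i => ω (i.castAdd n)) := by
  simp [prodTM, List.ofFn_add, Fin.castAdd]

theorem opn_prodTM_le (hd : 2 ≤ d) : ∀ {n : ℕ} (ω : Fin (n + 1) → SpecialLinearGroup (Fin d) 𝕂),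
    opn (mat (prodTM ω)) ≤
      ∏ i, opn (mat (ω i))
  | 0, ω => by simp [prodTM]
  | n + 1, ω => by
    rw [prodTM_succ, Fin.prod_univ_succ, mul_comm (opn _), mat_mul]
    exact (opn_mul_le _ _).trans
      (mul_le_mul_of_nonneg_right (opn_prodTM_le hd _) (opn_nonneg _))

/-- Telescoping bound for the difference of two products, in multiplicative form. Writing
`b i` for the norm of `B i` and `δ i` for the norm of `A i - B i`, it reads
`∏ b i * (∏ (1 + δ i) - 1)`. -/
theorem opn_prodTM_sub_le (hd : 2 ≤ d) : ∀ {n : ℕ}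
    (A B : Fin (n + 1) → SpecialLinearGroup (Fin d) 𝕂),
    opn ((mat (prodTM A)) - (mat (prodTM B))) ≤
      (∏ i, opn (mat (B i))) *
        ((∏ i, (1 + opn ((mat (A i)) - (mat (B i))))) - 1)
  | 0, A, B => by
    have := one_le_opn hd (B 0)
    have hone : ∀ C : Fin (0 + 1) → SpecialLinearGroup (Fin d) 𝕂, prodTM C = C 0 := fun C => by
      simp [prodTM]
    rw [hone, hone]
    simp only [Nat.reduceAdd, Finset.univ_unique, Finset.prod_singleton, Fin.default_eq_zero]
    nlinarith [opn_nonneg ((mat (A 0)) - (mat (B 0)))]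
  | n + 1, A, B => by
    rw [prodTM_succ A, prodTM_succ B,
      Fin.prod_univ_succ (f := fun i => opn (mat (B i))),
      Fin.prod_univ_succ (f := fun i => 1 + opn (mat (A i) - mat (B i)))]
    have ih := opn_prodTM_sub_le hd (fun i => A i.succ) (fun i => B i.succ)
    have hQ := opn_prodTM_le hd (fun i => B i.succ)
    simp only [mat_mul]
    have hb := one_le_opn hd (B 0)
    have hA0 : opn (mat (A 0)) ≤
        opn ((mat (A 0)) - (mat (B 0)))
          + opn (mat (B 0)) := by
      simpa using opn_add_le ((mat (A 0)) - (mat (B 0)))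
        (mat (B 0))
    set P := (mat (prodTM (fun i => A i.succ)))
    set Q := (mat (prodTM (fun i => B i.succ)))
    set a := (mat (A 0))
    set b := (mat (B 0))
    set β := ∏ i : Fin (n + 1), opn (mat (B i.succ))
    set x := ∏ i : Fin (n + 1), (1 + opn ((mat (A i.succ)) -
      (mat (B i.succ))))
    have hδ := opn_nonneg (a - b)
    have hβ : 0 ≤ β := (opn_nonneg Q).trans hQ
    have hx : 0 ≤ β * (x - 1) := (opn_nonneg _).trans ih
    calc opn (P * a - Q * b) = opn ((P - Q) * a + Q * (a - b)) := by congr 1; noncomm_ring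
      _ ≤ opn (P - Q) * opn a + opn Q * opn (a - b) :=
          (opn_add_le _ _).trans (add_le_add (opn_mul_le _ _) (opn_mul_le _ _))
      _ ≤ (β * (x - 1)) * (opn b * (1 + opn (a - b))) + β * (opn b * opn (a - b)) := by
          refine add_le_add (mul_le_mul ih ?_ (opn_nonneg _) hx)
            (mul_le_mul hQ ?_ hδ hβ) <;> nlinarith
      _ = opn b * β * ((1 + opn (a - b)) * x - 1) := by ring

/-! ### Comparison of logarithms -/

/-- For `x ≥ 1`, Bernoulli's inequality `1 + R (x - 1) ≤ x ^ R` controls the range `β ≤ R`, and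
`1 + β (x - 1) ≤ β x` the remaining one. -/
theorem log_one_add_mul_le {β x : ℝ} (hβ : 1 ≤ β) (hx : 1 ≤ x) (R : ℕ) :
    Real.log (1 + β * (x - 1)) ≤ (R + 1) * Real.log x + if (R : ℝ) < β then Real.log β else 0 := by
  have hlx := Real.log_nonneg hx
  have hpos : 0 < 1 + β * (x - 1) := by nlinarith
  split_ifs with h
  · calc Real.log (1 + β * (x - 1)) ≤ Real.log (x * β) := Real.log_le_log hpos (by nlinarith)
      _ = Real.log x + Real.log β := Real.log_mul (by positivity) (by positivity)
      _ ≤ _ := by nlinarith [mul_nonneg (Nat.cast_nonneg (α := ℝ) R) hlx]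
  · have h1 : 1 + (R : ℝ) * (x - 1) ≤ x ^ R := by
      simpa using one_add_mul_le_pow (a := x - 1) (by linarith) R
    calc Real.log (1 + β * (x - 1)) ≤ Real.log (x ^ R) :=
          Real.log_le_log hpos (by nlinarith)
      _ = R * Real.log x := Real.log_pow _ _
      _ ≤ _ := by nlinarith

/-- Pathwise comparison of two products: the first error term is small when the `A i` are close
to the `B i`, and the second one involves the `B i` only. -/
theorem log_opn_prodTM_le (hd : 2 ≤ d) {n : ℕ} (A B : Fin (n + 1) → SpecialLinearGroup (Fin d) 𝕂)
    (R : ℕ) :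
    Real.log (opn (mat (prodTM A))) ≤
      Real.log (opn (mat (prodTM B))) +
      ((R + 1) * ∑ i, Real.log
        (1 + opn ((mat (A i)) - (mat (B i)))) +
      if (R : ℝ) < ∏ i, opn (mat (B i)) then
        ∑ i, Real.log (opn (mat (B i))) else 0) := by
  have hB : ∀ i, opn (mat (B i)) ≠ 0 := fun i =>
    (zero_lt_one.trans_le (one_le_opn hd (B i))).ne'
  have hδ : ∀ i, 1 ≤ 1 +
      opn ((mat (A i)) - (mat (B i))) := fun i => by
    linarith [opn_nonneg ((mat (A i)) - (mat (B i)))]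
  have h := opn_prodTM_sub_le hd A B
  have hβ : 1 ≤ ∏ i, opn (mat (B i)) :=
    Finset.one_le_prod fun i _ => one_le_opn hd (B i)
  have hx : 1 ≤ ∏ i, (1 +
      opn ((mat (A i)) - (mat (B i)))) :=
    Finset.one_le_prod fun i _ => hδ i
  rw [← Real.log_prod (fun i _ => hB i), ← Real.log_prod (fun i _ =>
    (zero_lt_one.trans_le (hδ i)).ne')]
  refine le_trans ?_ (add_le_add_right (log_one_add_mul_le hβ hx R) _)
  have hPQ : opn (mat (prodTM A)) ≤
      opn ((mat (prodTM A)) - (mat (prodTM B)))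
        + opn (mat (prodTM B)) := by
    simpa using opn_add_le
      ((mat (prodTM A)) - (mat (prodTM B)))
      (mat (prodTM B))
  have hQ1 := one_le_opn hd (prodTM B)
  have hP1 := one_le_opn hd (prodTM A)
  set y := (∏ i, opn (mat (B i))) * ((∏ i, (1 +
      opn ((mat (A i)) - (mat (B i))))) - 1)
  have hy : 0 ≤ y := (opn_nonneg _).trans h
  rw [← Real.log_mul (by linarith) (by linarith)]
  exact Real.log_le_log (by linarith) (by nlinarith)

/-- `log (1 + d t)` is dominated by a multiple of `log^{1⋆} t`. -/
theorem exists_log_le_logpStar (d : ℕ) :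
    ∃ C : ℝ, 0 ≤ C ∧ ∀ t : ℝ, 0 ≤ t → Real.log (1 + d * t) ≤ C * logpStar 1 t := by
  have hl : 0 ≤ Real.log (1 + d) := Real.log_nonneg (by linarith [Nat.cast_nonneg (α := ℝ) d])
  refine ⟨d * Real.exp 1 + (1 + Real.log (1 + d)), by positivity, fun t ht => ?_⟩
  unfold logpStar
  have hd0 := Nat.cast_nonneg (α := ℝ) d
  split_ifs with h
  · have h1 : Real.log (1 + d * t) ≤ d * t := by
      have := Real.log_le_sub_one_of_pos (x := 1 + d * t) (by positivity)
      linarith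
    rw [Real.rpow_one]
    have he := Real.exp_pos 1
    have : (d * Real.exp 1 + (1 + Real.log (1 + d))) * (1 / Real.exp 1 * t) =
        d * t + (1 + Real.log (1 + d)) * (1 / Real.exp 1 * t) := by
      field_simp
    rw [this]
    have : 0 ≤ (1 + Real.log (1 + d)) * (1 / Real.exp 1 * t) := by positivity
    linarith
  · push Not at h
    have ht1 : 1 ≤ t := (Real.one_le_exp (by norm_num)).trans h
    have hlt : 1 ≤ Real.log t := by
      rwa [Real.le_log_iff_exp_le (by linarith)]
    rw [Real.rpow_one]
    calc Real.log (1 + d * t) ≤ Real.log ((1 + d) * t) :=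
          Real.log_le_log (by positivity) (by nlinarith)
      _ = Real.log (1 + d) + Real.log t := Real.log_mul (by positivity) (by positivity)
      _ ≤ _ := by
        have : 0 ≤ d * Real.exp 1 * Real.log t := by positivity
        nlinarith

/-! ### Measurability and integrability -/

theorem secondCountable_SL (𝕂 : Type*) [NontriviallyNormedField 𝕂] [LocallyCompactSpace 𝕂] (d : ℕ) :
    SecondCountableTopology (SpecialLinearGroup (Fin d) 𝕂) := by
  have : ProperSpace 𝕂 := ProperSpace.of_locallyCompactSpace 𝕂
  have : SecondCountableTopology (Matrix (Fin d) (Fin d) 𝕂) :=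
    inferInstanceAs (SecondCountableTopology (Fin d → Fin d → 𝕂))
  exact TopologicalSpace.Subtype.secondCountableTopology
    {A : Matrix (Fin d) (Fin d) 𝕂 | A.det = 1}

theorem borelSpace_SL : BorelSpace (SpecialLinearGroup (Fin d) 𝕂) := ⟨rfl⟩

theorem continuous_mat :
    Continuous (mat : SpecialLinearGroup (Fin d) 𝕂 → Matrix (Fin d) (Fin d) 𝕂) :=
  continuous_subtype_val

theorem continuous_opn : Continuous (opn : Matrix (Fin d) (Fin d) 𝕂 → ℝ) :=
  continuous_const.mul continuous_norm

theorem continuous_mat_prodTM : ∀ n : ℕ,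
    Continuous fun ω : Fin n → SpecialLinearGroup (Fin d) 𝕂 => mat (prodTM ω)
  | 0 => by
    simp only [prodTM, List.ofFn_zero]
    exact continuous_const
  | n + 1 => by
    simp only [prodTM_succ, mat_mul]
    refine Continuous.matrix_mul ?_ (continuous_mat.comp (continuous_apply 0))
    exact (continuous_mat_prodTM n).comp
      (continuous_pi fun i => continuous_apply (Fin.succ i))

/-- The logarithm of the rescaled norm; a nonnegative subadditive cocycle. -/
def lg (g : SpecialLinearGroup (Fin d) 𝕂) : ℝ := Real.log (opn (mat g))

theorem lg_nonneg (hd : 2 ≤ d) (g : SpecialLinearGroup (Fin d) 𝕂) : 0 ≤ lg g :=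
  Real.log_nonneg (one_le_opn hd g)

theorem lg_mul_le (hd : 2 ≤ d) (g h : SpecialLinearGroup (Fin d) 𝕂) : lg (g * h) ≤ lg g + lg h := by
  have hg := one_le_opn hd g
  have hh := one_le_opn hd h
  have hgh := one_le_opn hd (g * h)
  unfold lg
  rw [← Real.log_mul (by linarith) (by linarith)]
  refine Real.log_le_log (by linarith) ?_
  rw [mat_mul]
  exact opn_mul_le _ _

theorem lg_prodTM_le (hd : 2 ≤ d) {n : ℕ} (ω : Fin (n + 1) → SpecialLinearGroup (Fin d) 𝕂) :
    lg (prodTM ω) ≤ ∑ i, lg (ω i) := by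
  unfold lg
  rw [← Real.log_prod fun i _ => (zero_lt_one.trans_le (one_le_opn hd (ω i))).ne']
  exact Real.log_le_log (zero_lt_one.trans_le (one_le_opn hd _)) (opn_prodTM_le hd ω)

theorem measurable_lg_prodTM [LocallyCompactSpace 𝕂] (n : ℕ) :
    Measurable fun ω : Fin n → SpecialLinearGroup (Fin d) 𝕂 => lg (prodTM ω) := by
  have := secondCountable_SL 𝕂 d
  have := borelSpace_SL (𝕂 := 𝕂) (d := d)
  exact Real.measurable_log.comp (continuous_opn.comp (continuous_mat_prodTM n)).measurable

theorem measurable_opn_mat :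
    Measurable fun g : SpecialLinearGroup (Fin d) 𝕂 => opn (mat g) := by
  have := borelSpace_SL (𝕂 := 𝕂) (d := d)
  exact (continuous_opn.comp continuous_mat).measurable

theorem measurable_lg : Measurable (lg : SpecialLinearGroup (Fin d) 𝕂 → ℝ) :=
  Real.measurable_log.comp measurable_opn_mat

theorem measurable_opn_sub [LocallyCompactSpace 𝕂] :
    Measurable fun q : SpecialLinearGroup (Fin d) 𝕂 × SpecialLinearGroup (Fin d) 𝕂 =>
      opn (mat q.1 - mat q.2) := by
  have := secondCountable_SL 𝕂 d
  have := borelSpace_SL (𝕂 := 𝕂) (d := d)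
  exact (continuous_opn.comp
    ((continuous_mat.comp continuous_fst).sub (continuous_mat.comp continuous_snd))).measurable

theorem integrable_lg (hd : 2 ≤ d) {ν : Measure (SpecialLinearGroup (Fin d) 𝕂)}
    (hν : MemPlog 1 ν) : Integrable lg ν := by
  obtain ⟨C, hC, hlog⟩ := exists_log_le_logpStar d
  refine ⟨measurable_lg.aestronglyMeasurable, ?_⟩
  rw [hasFiniteIntegral_iff_ofReal (Eventually.of_forall fun g => lg_nonneg hd g)]
  calc ∫⁻ g, ENNReal.ofReal (lg g) ∂ν
      ≤ ∫⁻ g, ENNReal.ofReal C * ENNReal.ofReal (logpStar 1 ‖mat g‖) ∂ν := by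
        refine lintegral_mono fun g => ?_
        rw [← ENNReal.ofReal_mul hC]
        refine ENNReal.ofReal_le_ofReal (le_trans ?_ (hlog _ (norm_nonneg _)))
        have := one_le_opn hd g
        refine Real.log_le_log (by linarith) ?_
        change opn (mat g) ≤ 1 + opn (mat g)
        linarith
    _ = ENNReal.ofReal C * ∫⁻ g, ENNReal.ofReal (logpStar 1 ‖mat g‖) ∂ν :=
        lintegral_const_mul' _ _ ENNReal.ofReal_ne_top
    _ < ⊤ := ENNReal.mul_lt_top ENNReal.ofReal_lt_top hν.2

theorem integrable_sum_lg (hd : 2 ≤ d) {ν : Measure (SpecialLinearGroup (Fin d) 𝕂)}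
    (hν : MemPlog 1 ν) (n : ℕ) :
    Integrable (fun ω : Fin n → SpecialLinearGroup (Fin d) 𝕂 => ∑ i, lg (ω i))
      (Measure.pi fun _ => ν) := by
  have := hν.1
  exact integrable_finsetSum _ fun i _ =>
    (measurePreserving_eval (fun _ : Fin n => ν) i).integrable_comp_of_integrable
      (integrable_lg hd hν)

theorem integrable_lg_prodTM [LocallyCompactSpace 𝕂] (hd : 2 ≤ d)
    {ν : Measure (SpecialLinearGroup (Fin d) 𝕂)} (hν : MemPlog 1 ν) : ∀ n : ℕ,
    Integrable (fun ω : Fin n → SpecialLinearGroup (Fin d) 𝕂 => lg (prodTM ω))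
      (Measure.pi fun _ => ν)
  | 0 => by
    have := hν.1
    simp only [prodTM, List.ofFn_zero]
    exact integrable_const _
  | n + 1 => by
    have := hν.1
    refine (integrable_sum_lg hd hν (n + 1)).mono' (measurable_lg_prodTM _).aestronglyMeasurable
      (Eventually.of_forall fun ω => ?_)
    rw [Real.norm_of_nonneg (lg_nonneg hd _)]
    exact lg_prodTM_le hd ω

/-! ### The Lyapunov exponent as a subadditive limit -/

/-- The expectation of `log (d ‖A_n‖)` under the law `ν`. -/
def elog (ν : Measure (SpecialLinearGroup (Fin d) 𝕂)) (n : ℕ) : ℝ :=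
  ∫ ω, lg (prodTM ω) ∂(Measure.pi fun _ : Fin n => ν)

theorem elog_nonneg (hd : 2 ≤ d) (ν : Measure (SpecialLinearGroup (Fin d) 𝕂)) (n : ℕ) :
    0 ≤ elog ν n :=
  integral_nonneg fun _ => lg_nonneg hd _

/-- Selecting finitely many distinct coordinates of an i.i.d. family gives an i.i.d. family. -/
theorem map_pi_comp {G : Type*} [MeasurableSpace G] (ν : Measure G) [IsProbabilityMeasure ν]
    {m n : ℕ} {f : Fin m → Fin n} (hf : Function.Injective f) :
    MeasurePreserving (fun (ω : Fin n → G) (i : Fin m) => ω (f i))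
      (Measure.pi fun _ => ν) (Measure.pi fun _ => ν) := by
  refine ⟨by fun_prop, ?_⟩
  have h := (ProbabilityTheory.iIndepFun_pi (μ := fun _ : Fin n => ν) (X := fun _ x => x)
    (fun _ => aemeasurable_id)).precomp hf
  rw [ProbabilityTheory.iIndepFun_iff_map_fun_eq_pi_map
    (fun i => (measurable_pi_apply (f i)).aemeasurable)] at h
  refine h.trans ?_
  congr 1
  funext i
  exact (measurePreserving_eval (fun _ : Fin n => ν) (f i)).map_eq

theorem subadditive_elog [LocallyCompactSpace 𝕂] (hd : 2 ≤ d)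
    {ν : Measure (SpecialLinearGroup (Fin d) 𝕂)} (hν : MemPlog 1 ν) : Subadditive (elog ν) := by
  intro m n
  have := hν.1
  have h1 := map_pi_comp ν (Fin.castAdd_injective m n)
  have h2 := map_pi_comp ν (Fin.natAdd_injective n m)
  have i1 : Integrable (fun ω => lg (prodTM fun i => ω (Fin.castAdd n i)))
      (Measure.pi fun _ : Fin (m + n) => ν) :=
    h1.integrable_comp_of_integrable (integrable_lg_prodTM hd hν m)
  have i2 : Integrable (fun ω => lg (prodTM fun i => ω (Fin.natAdd m i)))
      (Measure.pi fun _ : Fin (m + n) => ν) :=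
    h2.integrable_comp_of_integrable (integrable_lg_prodTM hd hν n)
  have e1 := h1.map_eq ▸ integral_map h1.measurable.aemeasurable
    (measurable_lg_prodTM (𝕂 := 𝕂) (d := d) m).aestronglyMeasurable
  have e2 := h2.map_eq ▸ integral_map h2.measurable.aemeasurable
    (measurable_lg_prodTM (𝕂 := 𝕂) (d := d) n).aestronglyMeasurable
  unfold elog
  rw [e1, e2, ← integral_add i1 i2]
  refine integral_mono (integrable_lg_prodTM hd hν _) (i1.add i2) fun ω => ?_
  change lg (prodTM ω) ≤ lg (prodTM fun i => ω (Fin.castAdd n i)) +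
    lg (prodTM fun i => ω (Fin.natAdd m i))
  rw [prodTM_add, add_comm]
  exact lg_mul_le hd _ _

theorem bddBelow_elog (hd : 2 ≤ d) (ν : Measure (SpecialLinearGroup (Fin d) 𝕂)) :
    BddBelow (Set.range fun n : ℕ => elog ν n / n) := by
  refine ⟨0, ?_⟩
  rintro _ ⟨n, rfl⟩
  exact div_nonneg (elog_nonneg hd ν n) (Nat.cast_nonneg n)

/-- The additive constant `log d` relating `elog` to the unnormalised expectation disappears in
the limit. -/
theorem lyap1_eq_lim [LocallyCompactSpace 𝕂] (hd : 2 ≤ d)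
    {ν : Measure (SpecialLinearGroup (Fin d) 𝕂)} (hν : MemPlog 1 ν) :
    lyap1 ν = (subadditive_elog hd hν).lim := by
  have := hν.1
  have hlim := (subadditive_elog hd hν).tendsto_lim (bddBelow_elog hd ν)
  have h0 : Tendsto (fun n : ℕ => (n : ℝ)⁻¹ * Real.log d) atTop (𝓝 0) := by
    simpa using (tendsto_inv_atTop_nhds_zero_nat (𝕜 := ℝ)).mul_const (Real.log d)
  have h := hlim.sub h0
  rw [sub_zero] at h
  refine Tendsto.limsup_eq (h.congr fun n => ?_)
  have hd0 : (d : ℝ) ≠ 0 := by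
    have : d ≠ 0 := by omega
    exact_mod_cast this
  have hpt : ∀ ω : Fin n → SpecialLinearGroup (Fin d) 𝕂,
      Real.log ‖mat (prodTM ω)‖ = lg (prodTM ω) - Real.log d := fun ω => by
    have h1 := one_le_opn hd (prodTM ω)
    have h2 : ‖mat (prodTM ω)‖ ≠ 0 := fun h0 => by
      simp only [opn, h0, mul_zero] at h1
      linarith
    rw [lg, opn, Real.log_mul hd0 h2]
    ring
  have hint : ∫ ω, Real.log ‖mat (prodTM ω)‖ ∂(Measure.pi fun _ : Fin n => ν) =
      elog ν n - Real.log d := by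
    simp_rw [hpt]
    rw [integral_sub (integrable_lg_prodTM hd hν n) (integrable_const _)]
    simp [elog]
  change elog ν n / n - (n : ℝ)⁻¹ * Real.log d =
    (n : ℝ)⁻¹ * ∫ ω, Real.log ‖mat (prodTM ω)‖ ∂(Measure.pi fun _ : Fin n => ν)
  rw [hint]
  ring

theorem lyap1_le_elog_div [LocallyCompactSpace 𝕂] (hd : 2 ≤ d)
    {ν : Measure (SpecialLinearGroup (Fin d) 𝕂)} (hν : MemPlog 1 ν) {n : ℕ} (hn : n ≠ 0) :
    lyap1 ν ≤ elog ν n / n := by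
  rw [lyap1_eq_lim hd hν]
  exact (subadditive_elog hd hν).lim_le_div (bddBelow_elog hd ν) hn

theorem tendsto_elog_div [LocallyCompactSpace 𝕂] (hd : 2 ≤ d)
    {ν : Measure (SpecialLinearGroup (Fin d) 𝕂)} (hν : MemPlog 1 ν) :
    Tendsto (fun n : ℕ => elog ν n / n) atTop (𝓝 (lyap1 ν)) := by
  rw [lyap1_eq_lim hd hν]
  exact (subadditive_elog hd hν).tendsto_lim (bddBelow_elog hd ν)

theorem lyap1_nonneg [LocallyCompactSpace 𝕂] (hd : 2 ≤ d)
    {ν : Measure (SpecialLinearGroup (Fin d) 𝕂)} (hν : MemPlog 1 ν) : 0 ≤ lyap1 ν :=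
  ge_of_tendsto' (tendsto_elog_div hd hν) fun n =>
    div_nonneg (elog_nonneg hd ν n) (Nat.cast_nonneg n)

/-! ### Continuity of finite-time expectations along couplings -/

/-- The part of the expectation of `∑ log (d ‖B_i‖)` carried by the event
`∏ d ‖B_i‖ > R`, for `n` independent matrices with law `μ`. -/
def tailInt (μ : Measure (SpecialLinearGroup (Fin d) 𝕂)) (n R : ℕ) : ℝ :=
  ∫ ω, (if (R : ℝ) < ∏ i, opn (mat (ω i)) then ∑ i, lg (ω i) else 0)
    ∂(Measure.pi fun _ : Fin n => μ)

theorem measurable_tail (n R : ℕ) :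
    Measurable fun ω : Fin n → SpecialLinearGroup (Fin d) 𝕂 =>
      if (R : ℝ) < ∏ i, opn (mat (ω i)) then ∑ i, lg (ω i) else 0 := by
  refine Measurable.ite (measurableSet_lt measurable_const ?_) ?_ measurable_const
  · exact Finset.measurable_prod _ fun i _ => measurable_opn_mat.comp (measurable_pi_apply i)
  · exact Finset.measurable_sum _ fun i _ => measurable_lg.comp (measurable_pi_apply i)

theorem norm_tail_le (hd : 2 ≤ d) (n R : ℕ) (ω : Fin n → SpecialLinearGroup (Fin d) 𝕂) :
    ‖if (R : ℝ) < ∏ i, opn (mat (ω i)) then ∑ i, lg (ω i) else 0‖ ≤ ∑ i, lg (ω i) := by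
  have h : 0 ≤ ∑ i, lg (ω i) := Finset.sum_nonneg fun i _ => lg_nonneg hd (ω i)
  split_ifs
  · rw [Real.norm_of_nonneg h]
  · simpa using h

theorem integrable_tail (hd : 2 ≤ d) {μ : Measure (SpecialLinearGroup (Fin d) 𝕂)}
    (hμ : MemPlog 1 μ) (n R : ℕ) :
    Integrable (fun ω : Fin n → SpecialLinearGroup (Fin d) 𝕂 =>
      if (R : ℝ) < ∏ i, opn (mat (ω i)) then ∑ i, lg (ω i) else 0) (Measure.pi fun _ => μ) :=
  (integrable_sum_lg hd hμ n).mono' (measurable_tail n R).aestronglyMeasurable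
    (Eventually.of_forall fun ω => norm_tail_le hd n R ω)

theorem tendsto_tailInt (hd : 2 ≤ d) {μ : Measure (SpecialLinearGroup (Fin d) 𝕂)}
    (hμ : MemPlog 1 μ) (n : ℕ) : Tendsto (tailInt μ n) atTop (𝓝 0) := by
  have h := tendsto_integral_of_dominated_convergence (μ := Measure.pi fun _ : Fin n => μ)
    (F := fun R ω => if (R : ℝ) < ∏ i, opn (mat (ω i)) then ∑ i, lg (ω i) else 0)
    (f := fun _ => (0 : ℝ)) (fun ω => ∑ i, lg (ω i))
    (fun R => (measurable_tail n R).aestronglyMeasurable) (integrable_sum_lg hd hμ n)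
    (fun R => Eventually.of_forall fun ω => norm_tail_le hd n R ω)
    (Eventually.of_forall fun ω => by
      obtain ⟨N, hN⟩ := exists_nat_ge (∏ i, opn (mat (ω i)))
      refine tendsto_const_nhds.congr' ?_
      filter_upwards [eventually_ge_atTop N] with R hR
      rw [if_neg]
      exact not_lt.2 (hN.trans (by exact_mod_cast hR)))
  rw [integral_zero] at h
  exact h

theorem log_one_add_opn_nonneg (M : Matrix (Fin d) (Fin d) 𝕂) : 0 ≤ Real.log (1 + opn M) :=
  Real.log_nonneg (by linarith [opn_nonneg M])

/-- Comparison of finite-time expectations through a coupling `η` of the two laws: run the two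
products along independent copies of `η` and integrate `log_opn_prodTM_le`. -/
theorem elog_le_of_coupling [LocallyCompactSpace 𝕂] (hd : 2 ≤ d)
    {ν μ : Measure (SpecialLinearGroup (Fin d) 𝕂)} (hν : MemPlog 1 ν) (hμ : MemPlog 1 μ)
    {η : Measure (SpecialLinearGroup (Fin d) 𝕂 × SpecialLinearGroup (Fin d) 𝕂)}
    (h1 : η.map Prod.fst = ν) (h2 : η.map Prod.snd = μ)
    (hη : Integrable (fun q => Real.log (1 + opn (mat q.1 - mat q.2))) η) (n R : ℕ) :
    elog ν (n + 1) ≤ elog μ (n + 1) +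
      ((R + 1) * ((n + 1) * ∫ q, Real.log (1 + opn (mat q.1 - mat q.2)) ∂η) +
        tailInt μ (n + 1) R) := by
  have := hν.1
  have := hμ.1
  have : IsProbabilityMeasure η := by
    refine ⟨?_⟩
    have h : ν Set.univ = 1 := measure_univ
    rwa [← h1, Measure.map_apply measurable_fst MeasurableSet.univ, Set.preimage_univ] at h
  have p1 : MeasurePreserving (fun (ω : Fin (n + 1) → _) i => (ω i).1)
      (Measure.pi fun _ => η) (Measure.pi fun _ => ν) :=
    measurePreserving_pi _ _ fun _ => ⟨measurable_fst, h1⟩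
  have p2 : MeasurePreserving (fun (ω : Fin (n + 1) → _) i => (ω i).2)
      (Measure.pi fun _ => η) (Measure.pi fun _ => μ) :=
    measurePreserving_pi _ _ fun _ => ⟨measurable_snd, h2⟩
  have i1 : Integrable (fun ω => lg (prodTM fun i => (ω i).1))
      (Measure.pi fun _ : Fin (n + 1) => η) :=
    p1.integrable_comp_of_integrable (integrable_lg_prodTM hd hν _)
  have i2 : Integrable (fun ω => lg (prodTM fun i => (ω i).2))
      (Measure.pi fun _ : Fin (n + 1) => η) :=
    p2.integrable_comp_of_integrable (integrable_lg_prodTM hd hμ _)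
  have i3 : Integrable (fun ω => if (R : ℝ) < ∏ i, opn (mat (ω i).2) then
      ∑ i, lg (ω i).2 else 0) (Measure.pi fun _ : Fin (n + 1) => η) :=
    p2.integrable_comp_of_integrable (integrable_tail hd hμ _ R)
  have i4 : ∀ i, Integrable (fun ω => Real.log (1 + opn (mat (ω i).1 - mat (ω i).2)))
      (Measure.pi fun _ : Fin (n + 1) => η) := fun i =>
    (measurePreserving_eval (fun _ => η) i).integrable_comp_of_integrable hη
  have e1 := p1.map_eq ▸ integral_map p1.measurable.aemeasurable
    (measurable_lg_prodTM (𝕂 := 𝕂) (d := d) _).aestronglyMeasurable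
  have e2 := p2.map_eq ▸ integral_map p2.measurable.aemeasurable
    (measurable_lg_prodTM (𝕂 := 𝕂) (d := d) _).aestronglyMeasurable
  have e3 := p2.map_eq ▸ integral_map p2.measurable.aemeasurable
    (measurable_tail (𝕂 := 𝕂) (d := d) _ R).aestronglyMeasurable
  have e4 : ∀ i, ∫ ω, Real.log (1 + opn (mat (ω i).1 - mat (ω i).2))
      ∂(Measure.pi fun _ : Fin (n + 1) => η) =
      ∫ q, Real.log (1 + opn (mat q.1 - mat q.2)) ∂η := fun i =>
    integral_comp_eval (μ := fun _ : Fin (n + 1) => η) (i := i)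
      (f := fun q => Real.log (1 + opn (mat q.1 - mat q.2))) hη.aestronglyMeasurable
  have i5 := (integrable_finsetSum Finset.univ fun i _ => i4 i).const_mul ((R : ℝ) + 1)
  have e5 : ∫ ω, ((R : ℝ) + 1) * ∑ i, Real.log (1 + opn (mat (ω i).1 - mat (ω i).2))
      ∂(Measure.pi fun _ : Fin (n + 1) => η) =
      (R + 1) * ((n + 1) * ∫ q, Real.log (1 + opn (mat q.1 - mat q.2)) ∂η) := by
    rw [integral_const_mul, integral_finsetSum _ fun i _ => i4 i]
    simp [e4]
  have i6 : Integrable (fun ω => ((R : ℝ) + 1) *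
      ∑ i, Real.log (1 + opn (mat (ω i).1 - mat (ω i).2)) +
      if (R : ℝ) < ∏ i, opn (mat (ω i).2) then ∑ i, lg (ω i).2 else 0)
      (Measure.pi fun _ : Fin (n + 1) => η) := i5.add i3
  unfold elog tailInt
  rw [e1, e2, e3, ← e5, ← integral_add i5 i3, ← integral_add i2 i6]
  exact integral_mono i1 (i2.add i6) fun ω =>
    log_opn_prodTM_le hd (fun i => (ω i).1) (fun i => (ω i).2) R

/-- The quantity `∫ log (1 + d ‖A - B‖)` of a coupling is controlled by its `log^{1⋆}` cost. -/
theorem exists_cost_bound (𝕂 : Type*) [NontriviallyNormedField 𝕂] [LocallyCompactSpace 𝕂] (d : ℕ) :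
    ∃ C : ℝ, 0 ≤ C ∧
    ∀ (η : Measure (SpecialLinearGroup (Fin d) 𝕂 × SpecialLinearGroup (Fin d) 𝕂)) (δ : ℝ),
      0 ≤ δ → ∫⁻ q, ENNReal.ofReal (logpStar 1 ‖mat q.1 - mat q.2‖) ∂η ≤ ENNReal.ofReal δ →
      Integrable (fun q => Real.log (1 + opn (mat q.1 - mat q.2))) η ∧
        ∫ q, Real.log (1 + opn (mat q.1 - mat q.2)) ∂η ≤ C * δ := by
  obtain ⟨C, hC, hlog⟩ := exists_log_le_logpStar d
  refine ⟨C, hC, fun η δ hδ h => ?_⟩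
  have hm : AEStronglyMeasurable (fun q : SpecialLinearGroup (Fin d) 𝕂 ×
      SpecialLinearGroup (Fin d) 𝕂 => Real.log (1 + opn (mat q.1 - mat q.2))) η :=
    (Real.measurable_log.comp (measurable_opn_sub.const_add 1)).aestronglyMeasurable
  have hle : ∫⁻ q, ENNReal.ofReal (Real.log (1 + opn (mat q.1 - mat q.2))) ∂η ≤
      ENNReal.ofReal (C * δ) := by
    calc ∫⁻ q, ENNReal.ofReal (Real.log (1 + opn (mat q.1 - mat q.2))) ∂η
        ≤ ∫⁻ q, ENNReal.ofReal C * ENNReal.ofReal (logpStar 1 ‖mat q.1 - mat q.2‖) ∂η := by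
          refine lintegral_mono fun q => ?_
          rw [← ENNReal.ofReal_mul hC]
          exact ENNReal.ofReal_le_ofReal (hlog _ (norm_nonneg _))
      _ = ENNReal.ofReal C * ∫⁻ q, ENNReal.ofReal (logpStar 1 ‖mat q.1 - mat q.2‖) ∂η :=
          lintegral_const_mul' _ _ ENNReal.ofReal_ne_top
      _ ≤ ENNReal.ofReal (C * δ) := by
          rw [ENNReal.ofReal_mul hC]
          gcongr
  have hnn := Eventually.of_forall (f := ae η) fun q : SpecialLinearGroup (Fin d) 𝕂 ×
      SpecialLinearGroup (Fin d) 𝕂 => log_one_add_opn_nonneg (mat q.1 - mat q.2)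
  refine ⟨⟨hm, ?_⟩, ?_⟩
  · rw [hasFiniteIntegral_iff_ofReal hnn]
    exact hle.trans_lt ENNReal.ofReal_lt_top
  · rw [integral_eq_lintegral_of_nonneg_ae hnn hm]
    exact ENNReal.toReal_le_of_le_ofReal (by positivity) hle

/-- Finite-time expectations are upper semi-continuous for `W¹_log`. -/
theorem eventually_elog_le [LocallyCompactSpace 𝕂] (hd : 2 ≤ d)
    {μ : Measure (SpecialLinearGroup (Fin d) 𝕂)} (hμ : MemPlog 1 μ)
    {μseq : ℕ → Measure (SpecialLinearGroup (Fin d) 𝕂)} (hseq : ∀ k, MemPlog 1 (μseq k))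
    (hconv : Tendsto (fun k => Wlog 1 (μseq k) μ) atTop (𝓝 0)) (n : ℕ) {ε : ℝ} (hε : 0 < ε) :
    ∀ᶠ k in atTop, elog (μseq k) (n + 1) ≤ elog μ (n + 1) + ε := by
  obtain ⟨C, hC, hcost⟩ := exists_cost_bound 𝕂 d
  -- The truncation level is fixed first, and only then the size of the coupling cost.
  obtain ⟨R, hR⟩ := ((tendsto_tailInt hd hμ (n + 1)).eventually (gt_mem_nhds (half_pos hε))).exists
  set K : ℝ := (R + 1) * ((n + 1) * C) with hK
  have hK0 : 0 ≤ K := by positivity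
  have hδ : 0 < ε / 2 / (K + 1) := by positivity
  filter_upwards [hconv.eventually (gt_mem_nhds (ENNReal.ofReal_pos.2 hδ))] with k hk
  unfold Wlog transportCost at hk
  simp only [iInf_lt_iff] at hk
  obtain ⟨η, ⟨h1, h2⟩, hη⟩ := hk
  obtain ⟨hint, hle⟩ := hcost η _ hδ.le hη.le
  have h := elog_le_of_coupling hd (hseq k) hμ h1 h2 hint n R
  have h3 : ((R : ℝ) + 1) * ((n + 1) * ∫ q, Real.log (1 + opn (mat q.1 - mat q.2)) ∂η) ≤
      ε / 2 := by
    calc ((R : ℝ) + 1) * ((n + 1) * ∫ q, Real.log (1 + opn (mat q.1 - mat q.2)) ∂η)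
        ≤ (R + 1) * ((n + 1) * (C * (ε / 2 / (K + 1)))) := by gcongr
      _ = K / (K + 1) * (ε / 2) := by rw [hK]; ring
      _ ≤ 1 * (ε / 2) := by
          gcongr
          rw [div_le_one (by positivity)]
          linarith
      _ = ε / 2 := one_mul _
  linarith

/-- **Upper semi-continuity of the top Lyapunov exponent** (Theorem 2.6 of the paper).
The map `μ ↦ λ₁(μ)` is upper semi-continuous on `(𝒫¹_log(SL_d(𝕂)), W¹_log)` (and hence in
all the finer Wasserstein-type topologies). -/
theorem lyap1_upper_semicontinuous {𝕂 : Type*} [NontriviallyNormedField 𝕂] [CompleteSpace 𝕂]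
    [LocallyCompactSpace 𝕂] {d : ℕ} (hd : 2 ≤ d)
    (μ : Measure (SpecialLinearGroup (Fin d) 𝕂)) (hμ : MemPlog 1 μ)
    (μseq : ℕ → Measure (SpecialLinearGroup (Fin d) 𝕂)) (hseq : ∀ n, MemPlog 1 (μseq n))
    (hconv : Tendsto (fun n => Wlog 1 (μseq n) μ) atTop (nhds 0)) :
    limsup (fun n => lyap1 (μseq n)) atTop ≤ lyap1 μ := by
  refine ge_of_tendsto ((tendsto_add_atTop_iff_nat 1).2 (tendsto_elog_div hd hμ))
    (Eventually.of_forall fun n => ?_)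
  refine le_of_forall_pos_le_add fun ε hε => ?_
  -- The real `limsup` is only meaningful because the exponents are bounded below by `0`.
  have hcob : IsCoboundedUnder (· ≤ ·) atTop fun k => lyap1 (μseq k) :=
    (isBoundedUnder_of ⟨0, fun k => lyap1_nonneg hd (hseq k)⟩ :
      IsBoundedUnder (· ≥ ·) atTop fun k => lyap1 (μseq k)).isCoboundedUnder_le
  refine limsup_le_of_le hcob ?_
  have hn : (0 : ℝ) < ((n + 1 : ℕ) : ℝ) := by positivity
  filter_upwards [eventually_elog_le hd hμ hseq hconv n (mul_pos hε hn)] with k hk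
  calc lyap1 (μseq k) ≤ elog (μseq k) (n + 1) / ((n + 1 : ℕ) : ℝ) :=
        lyap1_le_elog_div hd (hseq k) n.succ_ne_zero
    _ ≤ (elog μ (n + 1) + ε * ((n + 1 : ℕ) : ℝ)) / ((n + 1 : ℕ) : ℝ) := by gcongr
    _ = elog μ (n + 1) / ((n + 1 : ℕ) : ℝ) + ε := by field_simp

end RMP

end
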